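/- arXiv:1908.08771 — 2 statements merged into one kernel-verified Lean document; each statement's English description precedes it below -/
import Mathlib

section
/- (Lemma 1.) Let P ≥ 1, let w ∈ ℝ^P be nonzero, let Σ ∈ ℝ^{P×P} be symmetric positive-definite, let m₁*, m₂* ∈ ℝ^P, and let ν₁*, ν₂* > 0. Then the double integral over ℝ^P × ℝ^P of Φ( wᵀ(μ₂ − μ₁) / √(2 wᵀΣw) ) against the product of the Gaussian densities f_{m₁*, Σ/ν₁*}(μ₁) and f_{m₂*, Σ/ν₂*}(μ₂) equals Φ( ( wᵀ(m₂* − m₁*) / √(2 wᵀΣw) ) · √( 2 ν₁* ν₂* / (ν₁* + ν₂* + 2 ν₁* ν₂*) ) ). -/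
open MeasureTheory Real
open scoped Matrix

/-- The standard normal cumulative distribution function `Φ`. -/
noncomputable def stdCdf (x : ℝ) : ℝ :=
  ∫ t in Set.Iio x, (2 * Real.pi) ^ (-(1:ℝ)/2) * Real.exp (-t ^ 2 / 2)

/-- Gaussian density on `ℝ^P` with mean `m` and covariance `C`. -/
noncomputable def gaussDensity {P : ℕ} (m : Fin P → ℝ) (C : Matrix (Fin P) (Fin P) ℝ)
    (x : Fin P → ℝ) : ℝ :=
  (2 * Real.pi) ^ (-(P : ℝ) / 2) * C.det ^ (-(1:ℝ)/2) *
    Real.exp (-(1/2) * ((x - m) ⬝ᵥ C⁻¹.mulVec (x - m)))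

/-- The multivariate gamma function `Γ_P`. -/
noncomputable def multiGamma (P : ℕ) (a : ℝ) : ℝ :=
  Real.pi ^ ((P : ℝ) * ((P : ℝ) - 1) / 4) * ∏ j ∈ Finset.range P, Real.Gamma (a - (j : ℝ) / 2)

/-- The inverse-Wishart density with scale matrix `S` and degrees of freedom `κ`. -/
noncomputable def invWishartDensity {P : ℕ} (S : Matrix (Fin P) (Fin P) ℝ) (κ : ℝ)
    (V : Matrix (Fin P) (Fin P) ℝ) : ℝ :=
  S.det ^ (κ / 2) / (2 ^ (κ * (P : ℝ) / 2) * multiGamma P (κ / 2)) *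
    V.det ^ (-(κ + (P : ℝ) + 1) / 2) * Real.exp (-(1/2) * (S * V⁻¹).trace)

/-- The regularized incomplete beta function `I(x; a, b)`. -/
noncomputable def regIncBeta (x a b : ℝ) : ℝ :=
  (Real.Gamma (a + b) / (Real.Gamma a * Real.Gamma b)) *
    ∫ t in (0:ℝ)..x, t ^ (a - 1) * (1 - t) ^ (b - 1)

/-!
Write `c = wᵀΣw` and `s = √(2c)`. Since `Φ(t / s) = ℙ(Z ≤ t)` for `Z ∼ N(0, s²)`, the double
integral is the probability that `Z + wᵀμ₁ - wᵀμ₂ ≤ 0` for independent `Z`, `μ₁`, `μ₂`. The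
projections `wᵀμᵢ` are normal with mean `wᵀmᵢ` and variance `c / νᵢ`, so this sum is normal with
mean `wᵀm₁ - wᵀm₂` and variance `2c + c / ν₁ + c / ν₂`.
-/

open ProbabilityTheory WithLp

section Cdf

lemma cdf_conv (μ ν : Measure ℝ) [IsProbabilityMeasure μ] [IsProbabilityMeasure ν] (x : ℝ) :
    cdf (μ ∗ ν) x = ∫ y, cdf ν (x - y) ∂μ := by
  have hpre : MeasurableSet ((fun p : ℝ × ℝ ↦ p.1 + p.2) ⁻¹' Set.Iic x) :=
    measurableSet_Iic.preimage (by fun_prop)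
  have hsec (y : ℝ) : Prod.mk y ⁻¹' ((fun p : ℝ × ℝ ↦ p.1 + p.2) ⁻¹' Set.Iic x) =
      Set.Iic (x - y) := by
    ext z
    simp [le_sub_iff_add_le']
  simp_rw [cdf_eq_real, Measure.real, ← hsec]
  rw [integral_toReal (measurable_measure_prodMk_left hpre).aemeasurable (by simp),
    ← Measure.prod_apply hpre, Measure.conv, Measure.map_apply (by fun_prop) measurableSet_Iic]

lemma stdCdf_eq_cdf (x : ℝ) : stdCdf x = cdf (gaussianReal 0 1) x := by
  have hpdf (t : ℝ) : (2 * π) ^ (-(1 : ℝ) / 2) * exp (-t ^ 2 / 2) = gaussianPDFReal 0 1 t := by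
    rw [gaussianPDFReal_def, sqrt_eq_rpow, ← rpow_neg (by positivity)]
    norm_num
  rw [cdf_eq_real, Measure.real, gaussianReal_apply_eq_integral _ one_ne_zero,
    ENNReal.toReal_ofReal (integral_nonneg fun t ↦ gaussianPDFReal_nonneg _ _ t),
    integral_Iic_eq_integral_Iio]
  simp_rw [stdCdf, hpdf]

lemma cdf_gaussianReal (m : ℝ) {v : NNReal} (hv : v ≠ 0) (x : ℝ) :
    cdf (gaussianReal m v) x = stdCdf ((x - m) / √v) := by
  have hpos : 0 < √(v : ℝ) := by positivity
  have hlaw : gaussianReal m v = (gaussianReal 0 1).map (fun z ↦ √v * z + m) := by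
    have hcomp : (fun z ↦ √v * z + m) = (· + m) ∘ (√v * ·) := rfl
    rw [hcomp, ← Measure.map_map (by fun_prop) (by fun_prop), gaussianReal_map_const_mul,
      gaussianReal_map_add_const]
    congr 1
    · simp
    · ext; simp
  rw [stdCdf_eq_cdf, cdf_eq_real, cdf_eq_real, hlaw,
    map_measureReal_apply (by fun_prop) measurableSet_Iic]
  congr 1
  ext z
  simp [le_div_iff₀ hpos, le_sub_iff_add_le, mul_comm]

lemma monotone_stdCdf : Monotone stdCdf := by
  rw [funext stdCdf_eq_cdf]
  exact monotone_cdf _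

lemma integral_stdCdf_gaussianReal {s : ℝ} (hs : 0 < s) (m b : ℝ) (v : NNReal) :
    ∫ y, stdCdf ((b - y) / s) ∂gaussianReal m v = stdCdf ((b - m) / √(s ^ 2 + v)) := by
  have hv : Real.toNNReal (s ^ 2) ≠ 0 := by simpa using hs.ne'
  have hcdf (y : ℝ) : stdCdf ((b - y) / s) = cdf (gaussianReal 0 (s ^ 2).toNNReal) (b - y) := by
    rw [cdf_gaussianReal 0 hv, Real.coe_toNNReal _ (sq_nonneg s), sqrt_sq hs.le, sub_zero]
  simp_rw [hcdf]
  rw [← cdf_conv, gaussianReal_conv_gaussianReal, cdf_gaussianReal _ (by simp [hs.ne']),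
    add_zero, NNReal.coe_add, Real.coe_toNNReal _ (sq_nonneg s), add_comm (v : ℝ)]

end Cdf

section GaussianDensity

lemma map_withDensity_comp {α β : Type*} [MeasurableSpace α] [MeasurableSpace β] (μ : Measure α)
    {f : α → β} (hf : Measurable f) {g : β → ENNReal} (hg : Measurable g) :
    (μ.withDensity (g ∘ f)).map f = (μ.map f).withDensity g := by
  ext s hs
  rw [Measure.map_apply hf hs, withDensity_apply _ (hf hs), withDensity_apply _ hs,
    setLIntegral_map hs hg hf]
  rfl

lemma pi_withDensity_ofReal {ι : Type*} [Fintype ι] {α : ι → Type*} [∀ i, MeasurableSpace (α i)]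
    (μ : ∀ i, Measure (α i)) [∀ i, SigmaFinite (μ i)] {f : ∀ i, α i → ℝ}
    (hf : ∀ i, Integrable (f i) (μ i)) (hf_nonneg : ∀ i x, 0 ≤ f i x) :
    Measure.pi (fun i ↦ (μ i).withDensity fun x ↦ ENNReal.ofReal (f i x)) =
      (Measure.pi μ).withDensity fun x ↦ ENNReal.ofReal (∏ i, f i (x i)) := by
  have (i : ι) := isFiniteMeasure_withDensity_ofReal (hf i).hasFiniteIntegral
  refine Measure.pi_eq fun s hs ↦ ?_
  rw [withDensity_apply _ (MeasurableSet.univ_pi hs), Measure.restrict_pi_pi,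
    ← ofReal_integral_eq_lintegral_ofReal (.fintype_prod_dep fun i ↦ (hf i).restrict)
      (.of_forall fun x ↦ Finset.prod_nonneg fun i _ ↦ hf_nonneg i (x i)),
    integral_fintype_prod_eq_prod,
    ENNReal.ofReal_prod_of_nonneg fun i _ ↦ integral_nonneg (hf_nonneg i)]
  refine Finset.prod_congr rfl fun i _ ↦ ?_
  rw [withDensity_apply _ (hs i),
    ofReal_integral_eq_lintegral_ofReal (hf i).restrict (.of_forall (hf_nonneg i))]

lemma map_mulVec_add_volume {ι : Type*} [Fintype ι] [DecidableEq ι] {A : Matrix ι ι ℝ}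
    (hA : A.det ≠ 0) (b : ι → ℝ) :
    (volume : Measure (ι → ℝ)).map (fun x ↦ A *ᵥ x + b) = ENNReal.ofReal |A.det⁻¹| • volume := by
  have hcomp : (fun x ↦ A *ᵥ x + b) = (· + b) ∘ Matrix.toLin' A := rfl
  rw [hcomp, ← Measure.map_map (by fun_prop)
      (LinearMap.continuous_of_finiteDimensional _).measurable,
    map_matrix_volume_pi_eq_smul_volume_pi hA, Measure.map_smul, map_add_right_eq_self]

variable {P : ℕ} {m : Fin P → ℝ} {C : Matrix (Fin P) (Fin P) ℝ}

lemma measurable_gaussDensity : Measurable (gaussDensity m C) := by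
  unfold gaussDensity
  fun_prop

lemma gaussDensity_nonneg (hC : 0 ≤ C.det) (x : Fin P → ℝ) : 0 ≤ gaussDensity m C x := by
  unfold gaussDensity
  positivity

lemma gaussDensity_zero_one (x : Fin P → ℝ) :
    gaussDensity 0 1 x = ∏ i, gaussianPDFReal 0 1 (x i) := by
  have hconst : (2 * π) ^ (-(P : ℝ) / 2) = (√(2 * π))⁻¹ ^ P := by
    rw [sqrt_eq_rpow, ← rpow_neg (by positivity), ← rpow_mul_natCast (by positivity)]
    ring_nf
  have hexp : -(1 / 2) * (x ⬝ᵥ x) = ∑ i, -x i ^ 2 / 2 := by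
    rw [dotProduct, Finset.mul_sum]
    exact Finset.sum_congr rfl fun i _ ↦ by ring
  simp only [gaussDensity, gaussianPDFReal, Finset.prod_mul_distrib, ← exp_sum, Matrix.det_one,
    one_rpow, inv_one, Matrix.one_mulVec, sub_zero, NNReal.coe_one, mul_one, Finset.prod_const,
    Finset.card_univ, Fintype.card_fin, hconst, hexp]

lemma mulVec_dotProduct_inv_mulVec {ι : Type*} [Fintype ι] [DecidableEq ι]
    {A : Matrix ι ι ℝ} (hA : A.det ≠ 0) (C : Matrix ι ι ℝ) (x : ι → ℝ) :
    A *ᵥ x ⬝ᵥ (A * C * Aᵀ)⁻¹ *ᵥ (A *ᵥ x) = x ⬝ᵥ C⁻¹ *ᵥ x := by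
  have hAu : IsUnit A.det := hA.isUnit
  rw [Matrix.mul_inv_rev, Matrix.mul_inv_rev, Matrix.mulVec_mulVec, Matrix.mul_assoc,
    Matrix.nonsing_inv_mul_cancel_right _ _ hAu, ← Matrix.vecMul_transpose,
    ← Matrix.dotProduct_mulVec, Matrix.mulVec_mulVec,
    Matrix.mul_nonsing_inv_cancel_left _ _ (by rwa [Matrix.det_transpose])]

lemma gaussDensity_mulVec_add {A : Matrix (Fin P) (Fin P) ℝ} (hA : A.det ≠ 0) (hC : 0 ≤ C.det)
    (b x : Fin P → ℝ) :
    gaussDensity (A *ᵥ m + b) (A * C * Aᵀ) (A *ᵥ x + b) = |A.det|⁻¹ * gaussDensity m C x := by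
  have hdet : (A * C * Aᵀ).det ^ (-(1 : ℝ) / 2) = |A.det|⁻¹ * C.det ^ (-(1 : ℝ) / 2) := by
    rw [Matrix.det_mul, Matrix.det_mul, Matrix.det_transpose, mul_right_comm, ← sq,
      mul_rpow (sq_nonneg _) hC, neg_div, rpow_neg (sq_nonneg _), ← sqrt_eq_rpow, sqrt_sq_eq_abs]
  have hsub : A *ᵥ x + b - (A *ᵥ m + b) = A *ᵥ (x - m) := by
    rw [add_sub_add_right_eq_sub, Matrix.mulVec_sub]
  rw [gaussDensity, hdet, hsub, mulVec_dotProduct_inv_mulVec hA, gaussDensity]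
  ring

/-- The law on `ℝ^P` with density `gaussDensity m C`; it is the normal law `N(m, C)` when `C` is
positive definite, see `map_toLp_gaussLaw`. -/
noncomputable def gaussLaw (m : Fin P → ℝ) (C : Matrix (Fin P) (Fin P) ℝ) :
    Measure (Fin P → ℝ) :=
  volume.withDensity fun x ↦ ENNReal.ofReal (gaussDensity m C x)

lemma integral_gaussLaw (hC : 0 ≤ C.det) (g : (Fin P → ℝ) → ℝ) :
    ∫ x, g x ∂gaussLaw m C = ∫ x, g x * gaussDensity m C x := by
  rw [gaussLaw, integral_withDensity_eq_integral_toReal_smul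
    measurable_gaussDensity.ennreal_ofReal (by simp)]
  simp_rw [ENNReal.toReal_ofReal (gaussDensity_nonneg hC _), smul_eq_mul, mul_comm]

lemma gaussLaw_zero_one : gaussLaw (0 : Fin P → ℝ) 1 = Measure.pi fun _ ↦ gaussianReal 0 1 := by
  simp_rw [gaussLaw, gaussDensity_zero_one, volume_pi,
    gaussianReal_of_var_ne_zero 0 one_ne_zero]
  exact (pi_withDensity_ofReal _ (fun _ ↦ integrable_gaussianPDFReal 0 1)
    fun _ ↦ gaussianPDFReal_nonneg 0 1).symm

lemma map_mulVec_add_gaussLaw {A : Matrix (Fin P) (Fin P) ℝ} (hA : A.det ≠ 0) (hC : 0 ≤ C.det)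
    (b : Fin P → ℝ) :
    (gaussLaw m C).map (fun x ↦ A *ᵥ x + b) = gaussLaw (A *ᵥ m + b) (A * C * Aᵀ) := by
  set r := ENNReal.ofReal |A.det|
  set ρ : (Fin P → ℝ) → ENNReal :=
    fun x ↦ ENNReal.ofReal (gaussDensity (A *ᵥ m + b) (A * C * Aᵀ) x) with hρ
  have hρm : Measurable ρ := measurable_gaussDensity.ennreal_ofReal
  have hdens : (fun x ↦ ENNReal.ofReal (gaussDensity m C x)) =
      (r • ρ) ∘ fun x ↦ A *ᵥ x + b := by
    ext x
    simp only [r, hρ, Function.comp_apply, Pi.smul_apply, smul_eq_mul]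
    rw [← ENNReal.ofReal_mul (abs_nonneg _), gaussDensity_mulVec_add hA hC,
      mul_inv_cancel_left₀ (abs_ne_zero.2 hA)]
  rw [gaussLaw, gaussLaw, hdens, map_withDensity_comp _ (by fun_prop) (hρm.const_smul r),
    map_mulVec_add_volume hA, withDensity_smul_measure, withDensity_smul _ hρm, smul_smul,
    ← ENNReal.ofReal_mul (abs_nonneg _), ← abs_mul, inv_mul_cancel₀ hA, abs_one,
    ENNReal.ofReal_one, one_smul]

open scoped MatrixOrder Matrix.Norms.L2Operator in
lemma map_toLp_gaussLaw (m : Fin P → ℝ) (hC : C.PosDef) :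
    (gaussLaw m C).map (toLp 2) = multivariateGaussian (toLp 2 m) C := by
  set A := CFC.sqrt C
  have hAA : A * A = C := CFC.sqrt_mul_sqrt_self C hC.posSemidef.nonneg
  have hAt : Aᵀ = A := (CFC.sqrt_nonneg C).isSelfAdjoint
  have hA : A.det ≠ 0 := by
    have := hC.det_pos.ne'
    rw [← hAA, Matrix.det_mul] at this
    exact left_ne_zero_of_mul this
  have hlaw : gaussLaw m C = (Measure.pi fun _ ↦ gaussianReal 0 1).map (fun x ↦ A *ᵥ x + m) := by
    rw [← gaussLaw_zero_one, map_mulVec_add_gaussLaw hA (by simp), hAt, mul_one, hAA,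
      Matrix.mulVec_zero, zero_add]
  rw [hlaw, multivariateGaussian, ← map_pi_eq_stdGaussian,
    Measure.map_map (by fun_prop) (by fun_prop), Measure.map_map (by fun_prop) (by fun_prop)]
  congr 1
  ext x i
  simp [A, add_comm]

open scoped RealInnerProductSpace in
lemma map_inner_multivariateGaussian {ι : Type*} [Fintype ι] [DecidableEq ι] {S : Matrix ι ι ℝ}
    (hS : S.PosSemidef) (μ w : EuclideanSpace ℝ ι) :
    (multivariateGaussian μ S).map (fun x ↦ ⟪w, x⟫) =
      gaussianReal ⟪w, μ⟫ (w ⬝ᵥ S *ᵥ w).toNNReal := by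
  have hvar : Var[fun x ↦ ⟪w, x⟫; multivariateGaussian μ S] = w ⬝ᵥ S *ᵥ w := by
    rw [← covarianceBilin_self IsGaussian.memLp_two_id, covarianceBilin_multivariateGaussian hS]
  change (multivariateGaussian μ S).map (innerSL ℝ w) = _
  rw [IsGaussian.map_eq_gaussianReal, ContinuousLinearMap.integral_comp_id_comm
    IsGaussian.integrable_id, integral_id_multivariateGaussian, ← hvar]
  rfl

lemma map_dotProduct_gaussLaw (w m : Fin P → ℝ) (hC : C.PosDef) :
    (gaussLaw m C).map (w ⬝ᵥ ·) = gaussianReal (w ⬝ᵥ m) (w ⬝ᵥ C *ᵥ w).toNNReal := by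
  have h := map_inner_multivariateGaussian hC.posSemidef (toLp 2 m) (toLp 2 w)
  rw [← map_toLp_gaussLaw m hC, Measure.map_map (by fun_prop) (by fun_prop)] at h
  simpa [Function.comp_def, EuclideanSpace.inner_toLp_toLp, dotProduct_comm] using h

lemma integral_stdCdf_mul_gaussDensity {s : ℝ} (hs : 0 < s) (hC : C.PosDef) (w m : Fin P → ℝ)
    (b : ℝ) :
    ∫ x, stdCdf ((b - w ⬝ᵥ x) / s) * gaussDensity m C x =
      stdCdf ((b - w ⬝ᵥ m) / √(s ^ 2 + w ⬝ᵥ C *ᵥ w)) := by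
  have hvar : 0 ≤ w ⬝ᵥ C *ᵥ w := hC.posSemidef.dotProduct_mulVec_nonneg w
  have hdot : Measurable (w ⬝ᵥ ·) := (continuous_const.dotProduct continuous_id).measurable
  have hmeas : Measurable fun t ↦ stdCdf ((b - t) / s) :=
    monotone_stdCdf.measurable.comp (by fun_prop)
  rw [← integral_gaussLaw hC.det_pos.le,
    ← integral_map hdot.aemeasurable hmeas.aestronglyMeasurable,
    map_dotProduct_gaussLaw w m hC, integral_stdCdf_gaussianReal hs, Real.coe_toNNReal _ hvar]

lemma integral_integral_stdCdf_mul_gaussDensity {s : ℝ} (hs : 0 < s)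
    {C₁ C₂ : Matrix (Fin P) (Fin P) ℝ} (hC₁ : C₁.PosDef) (hC₂ : C₂.PosDef)
    (w m₁ m₂ : Fin P → ℝ) :
    ∫ x, ∫ y, stdCdf ((w ⬝ᵥ (y - x)) / s) * (gaussDensity m₁ C₁ x * gaussDensity m₂ C₂ y) =
      stdCdf ((w ⬝ᵥ (m₂ - m₁)) / √(s ^ 2 + w ⬝ᵥ C₂ *ᵥ w + w ⬝ᵥ C₁ *ᵥ w)) := by
  have hvar : 0 ≤ w ⬝ᵥ C₂ *ᵥ w := hC₂.posSemidef.dotProduct_mulVec_nonneg w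
  set s' := √(s ^ 2 + w ⬝ᵥ C₂ *ᵥ w)
  have hs' : 0 < s' := by positivity
  have hinner (x : Fin P → ℝ) :
      ∫ y, stdCdf ((w ⬝ᵥ (y - x)) / s) * (gaussDensity m₁ C₁ x * gaussDensity m₂ C₂ y) =
        stdCdf ((w ⬝ᵥ m₂ - w ⬝ᵥ x) / s') * gaussDensity m₁ C₁ x := by
    have h := integral_stdCdf_mul_gaussDensity hs hC₂ (-w) m₂ (-w ⬝ᵥ x)
    simp only [neg_dotProduct, Matrix.mulVec_neg, dotProduct_neg, neg_neg, neg_sub_neg] at h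
    simp_rw [dotProduct_sub, mul_left_comm _ (gaussDensity m₁ C₁ x)]
    rw [integral_const_mul, h, mul_comm]
  simp_rw [hinner]
  rw [integral_stdCdf_mul_gaussDensity hs' hC₁, sq_sqrt (by positivity), dotProduct_sub]

end GaussianDensity

/-- Lemma 1: integrating the AUC `Φ(wᵀ(μ₂ − μ₁)/√(2wᵀΣw))` over the Gaussian posteriors
of the two class means yields a closed form. -/
theorem stmt1 {P : ℕ} (hP : 1 ≤ P) (w : Fin P → ℝ) (hw : w ≠ 0)
    (V : Matrix (Fin P) (Fin P) ℝ) (hV : V.IsSymm) (hVpd : V.PosDef)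
    (m₁ m₂ : Fin P → ℝ) (ν₁ ν₂ : ℝ) (hν₁ : 0 < ν₁) (hν₂ : 0 < ν₂) :
    (∫ μ₁ : Fin P → ℝ, ∫ μ₂ : Fin P → ℝ,
        stdCdf ((w ⬝ᵥ (μ₂ - μ₁)) / Real.sqrt (2 * (w ⬝ᵥ V.mulVec w))) *
          (gaussDensity m₁ (ν₁⁻¹ • V) μ₁ * gaussDensity m₂ (ν₂⁻¹ • V) μ₂)) =
      stdCdf ((w ⬝ᵥ (m₂ - m₁)) / Real.sqrt (2 * (w ⬝ᵥ V.mulVec w)) *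
        Real.sqrt (2 * ν₁ * ν₂ / (ν₁ + ν₂ + 2 * ν₁ * ν₂))) := by
  have hc : 0 < w ⬝ᵥ V *ᵥ w := hVpd.dotProduct_mulVec_pos hw
  have hvar (ν : ℝ) : w ⬝ᵥ (ν⁻¹ • V) *ᵥ w = ν⁻¹ * (w ⬝ᵥ V *ᵥ w) := by
    rw [Matrix.smul_mulVec, dotProduct_smul, smul_eq_mul]
  rw [integral_integral_stdCdf_mul_gaussDensity (by positivity) (hVpd.smul (inv_pos.2 hν₁))
    (hVpd.smul (inv_pos.2 hν₂)), hvar, hvar, sq_sqrt (by positivity)]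
  set c := w ⬝ᵥ V *ᵥ w
  have htotal : 2 * c + ν₂⁻¹ * c + ν₁⁻¹ * c =
      2 * c / (2 * ν₁ * ν₂ / (ν₁ + ν₂ + 2 * ν₁ * ν₂)) := by
    field_simp
    ring
  rw [htotal, sqrt_div (by positivity), div_div_eq_mul_div, mul_div_right_comm]
end

section
/- (Scalar version of the inverse-Wishart expectation of the Gaussian CDF.) Let s > 0, k > 0, and A ∈ ℝ. If a positive random variable T has the inverse-gamma density p(t) = (s/2)^{k/2} / Γ(k/2) · t^{−k/2 − 1} exp(−s/(2t)) for t > 0 (i.e., T is distributed as s times an inverse-chi-square variable with k degrees of freedom), then ∫₀^∞ Φ( A / √t ) p(t) dt = ½ + (sgn(A)/2) · I( A² / (A² + s) ; ½, k/2 ). -/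
open MeasureTheory Real
open scoped Matrix

/-!
`Φ (A / √t)` is `1 / 2` plus the integral over `0..A` of the centred Gaussian density of variance
`t`. By Fubini, its expectation under the inverse-gamma law is therefore `1 / 2` plus the integral
over `0..A` of the density of a centred Gaussian whose variance is mixed over that law.
The inverse-gamma law is conjugate to the Gaussian: the product of the two densities is a
Student density in `x` times another inverse-gamma density in `t`, so the mixture is a Student law.
The substitution `u = x ^ 2 / (x ^ 2 + s)` turns the integral of the Student density into an
incomplete beta integral.
-/

open ProbabilityTheory Set

lemma integral_Iic_zero_gaussianPDFReal {v : NNReal} (hv : v ≠ 0) :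
    ∫ x in Iic 0, gaussianPDFReal 0 v x = 1 / 2 := by
  have habs (x : ℝ) : gaussianPDFReal 0 v |x| = gaussianPDFReal 0 v x := by
    simp only [gaussianPDFReal, sub_zero, sq_abs]
  have hneg : ∫ x in Iic 0, gaussianPDFReal 0 v x = ∫ x in Ioi 0, gaussianPDFReal 0 v x := by
    simpa only [gaussianPDFReal, sub_zero, neg_sq, neg_zero] using
      integral_comp_neg_Iic 0 (gaussianPDFReal 0 v)
  have htotal : 1 = 2 * ∫ x in Ioi 0, gaussianPDFReal 0 v x := by
    simpa only [habs, integral_gaussianPDFReal_eq_one 0 hv] using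
      integral_comp_abs (f := gaussianPDFReal 0 v)
  linarith

lemma gaussianPDFReal_div_sqrt (v : NNReal) (x : ℝ) :
    (√v)⁻¹ * gaussianPDFReal 0 1 (x / √v) = gaussianPDFReal 0 v x := by
  rw [gaussianPDFReal, gaussianPDFReal, sub_zero, sub_zero, NNReal.coe_one, mul_one, mul_one,
    div_pow, sq_sqrt v.coe_nonneg, sqrt_mul (by positivity) (v : ℝ), mul_inv, ← mul_assoc,
    mul_comm (√v)⁻¹]
  congr 2
  ring

lemma stdCdf_eq_integral_gaussianPDFReal (x : ℝ) :
    stdCdf x = ∫ u in Iic x, gaussianPDFReal 0 1 u := by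
  have hconst : (2 * π) ^ (-(1 : ℝ) / 2) = (√(2 * π))⁻¹ := by
    rw [neg_div, rpow_neg (by positivity), sqrt_eq_rpow]
  simp only [stdCdf, gaussianPDFReal, integral_Iic_eq_integral_Iio, hconst, sub_zero,
    NNReal.coe_one, mul_one]

lemma stdCdf_div_sqrt (v : NNReal) (x : ℝ) :
    stdCdf (x / √v) = 1 / 2 + ∫ u in 0..x, gaussianPDFReal 0 v u := by
  have hint : Integrable (gaussianPDFReal 0 1) := integrable_gaussianPDFReal 0 1
  calc stdCdf (x / √v)
    _ = 1 / 2 + ∫ u in 0..x / √v, gaussianPDFReal 0 1 u := by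
      rw [stdCdf_eq_integral_gaussianPDFReal, ← integral_Iic_zero_gaussianPDFReal one_ne_zero,
        ← intervalIntegral.integral_Iic_sub_Iic hint.integrableOn hint.integrableOn,
        add_sub_cancel]
    _ = 1 / 2 + ∫ u in 0..x, gaussianPDFReal 0 v u := by
      simp only [← gaussianPDFReal_div_sqrt v, intervalIntegral.integral_const_mul]
      rw [← smul_eq_mul, intervalIntegral.inv_smul_integral_comp_div, zero_div]

/-- The density at `t > 0` of the inverse-gamma law with shape `a` and scale `b`; no meaning is
attached to its values for `t ≤ 0`. -/
noncomputable def invGammaPDFReal (a b t : ℝ) : ℝ :=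
  b ^ a / Gamma a * t ^ (-a - 1) * exp (-b / t)

/-- The density of Student's law with `2 * a` degrees of freedom rescaled by `√(b / a)`; it is
the marginal density of a centred Gaussian variable whose variance is inverse-gamma with shape `a`
and scale `b`. -/
noncomputable def studentPDFReal (a b x : ℝ) : ℝ :=
  (√(2 * π))⁻¹ * (Gamma (a + 1 / 2) / Gamma a) * b ^ a * (b + x ^ 2 / 2) ^ (-(a + 1 / 2))

section InvGamma

variable {a b : ℝ}

lemma invGammaPDFReal_nonneg (ha : 0 < a) (hb : 0 < b) {t : ℝ} (ht : 0 < t) :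
    0 ≤ invGammaPDFReal a b t := by
  unfold invGammaPDFReal
  positivity

@[fun_prop]
lemma measurable_invGammaPDFReal (a b : ℝ) : Measurable (invGammaPDFReal a b) := by
  unfold invGammaPDFReal
  fun_prop

lemma invGammaPDFReal_eq_gammaPDFReal_rpow {t : ℝ} (ht : 0 < t) :
    invGammaPDFReal a b t = t ^ ((-1 : ℝ) - 1) * gammaPDFReal a b (t ^ (-1 : ℝ)) := by
  rw [invGammaPDFReal, gammaPDFReal, if_pos (by positivity), ← rpow_mul ht.le,
    show -a - 1 = ((-1 : ℝ) - 1) + -1 * (a - 1) by ring, rpow_add ht, rpow_neg_one t,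
    neg_div, div_eq_mul_inv b t]
  ring

lemma integrable_gammaPDFReal (ha : 0 < a) (hb : 0 < b) : Integrable (gammaPDFReal a b) := by
  refine (lintegral_ofReal_ne_top_iff_integrable
    (measurable_gammaPDFReal a b).aestronglyMeasurable
    (ae_of_all _ (gammaPDFReal_nonneg ha hb))).mp ?_
  exact (lintegral_gammaPDF_eq_one ha hb).trans_ne ENNReal.one_ne_top

lemma setIntegral_Ioi_gammaPDFReal (ha : 0 < a) (hb : 0 < b) :
    ∫ y in Ioi 0, gammaPDFReal a b y = 1 := by
  have hpdf : ∀ y ∈ Ioi (0 : ℝ), gammaPDFReal a b y =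
      b ^ a / Gamma a * (y ^ (a - 1) * exp (-(b * y))) := fun y hy ↦ by
    rw [gammaPDFReal, if_pos (mem_Ioi.mp hy).le, mul_assoc]
  rw [setIntegral_congr_fun measurableSet_Ioi hpdf, integral_const_mul,
    integral_rpow_mul_exp_neg_mul_Ioi ha hb, one_div, inv_rpow hb.le]
  field_simp

lemma integrableOn_invGammaPDFReal (ha : 0 < a) (hb : 0 < b) :
    IntegrableOn (invGammaPDFReal a b) (Ioi 0) :=
  ((integrableOn_Ioi_comp_rpow_iff' _ (by norm_num)).mpr
    (integrable_gammaPDFReal ha hb).integrableOn).congr_fun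
    (fun _ ht ↦ (invGammaPDFReal_eq_gammaPDFReal_rpow ht).symm) measurableSet_Ioi

lemma setIntegral_Ioi_invGammaPDFReal (ha : 0 < a) (hb : 0 < b) :
    ∫ t in Ioi 0, invGammaPDFReal a b t = 1 := by
  have hinv := integral_comp_rpow_Ioi (gammaPDFReal a b) (p := -1) (by norm_num)
  simp only [abs_neg, abs_one, one_mul, smul_eq_mul] at hinv
  rw [setIntegral_congr_fun measurableSet_Ioi fun t ht ↦ invGammaPDFReal_eq_gammaPDFReal_rpow ht,
    hinv, setIntegral_Ioi_gammaPDFReal ha hb]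

lemma gaussianPDFReal_mul_invGammaPDFReal (ha : 0 < a) (hb : 0 < b) (x : ℝ) {t : ℝ} (ht : 0 < t) :
    gaussianPDFReal 0 t.toNNReal x * invGammaPDFReal a b t =
      studentPDFReal a b x * invGammaPDFReal (a + 1 / 2) (b + x ^ 2 / 2) t := by
  have hpow : t ^ (-(a + 1 / 2) - 1) = (√t)⁻¹ * t ^ (-a - 1) := by
    rw [sqrt_eq_rpow, ← rpow_neg ht.le, ← rpow_add ht]
    ring_nf
  have hexp : exp (-(b + x ^ 2 / 2) / t) = exp (-x ^ 2 / (2 * t)) * exp (-b / t) := by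
    rw [← exp_add]
    congr 1
    field_simp
    ring
  rw [gaussianPDFReal, invGammaPDFReal, studentPDFReal, invGammaPDFReal, coe_toNNReal t ht.le,
    sub_zero, sqrt_mul (by positivity), hpow, hexp, rpow_neg (by positivity)]
  field_simp

lemma integrableOn_gaussianPDFReal_mul_invGammaPDFReal (ha : 0 < a) (hb : 0 < b) (x : ℝ) :
    IntegrableOn (fun t ↦ gaussianPDFReal 0 t.toNNReal x * invGammaPDFReal a b t) (Ioi 0) :=
  IntegrableOn.congr_fun
    ((integrableOn_invGammaPDFReal (by positivity) (by positivity)).const_mul _)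
    (fun _ ht ↦ (gaussianPDFReal_mul_invGammaPDFReal ha hb x ht).symm) measurableSet_Ioi

lemma setIntegral_Ioi_gaussianPDFReal_mul_invGammaPDFReal (ha : 0 < a) (hb : 0 < b) (x : ℝ) :
    ∫ t in Ioi 0, gaussianPDFReal 0 t.toNNReal x * invGammaPDFReal a b t =
      studentPDFReal a b x := by
  rw [setIntegral_congr_fun measurableSet_Ioi
      fun t ht ↦ gaussianPDFReal_mul_invGammaPDFReal ha hb x ht,
    integral_const_mul, setIntegral_Ioi_invGammaPDFReal (by positivity) (by positivity), mul_one]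

lemma continuous_studentPDFReal (a : ℝ) (hb : 0 < b) : Continuous (studentPDFReal a b) := by
  unfold studentPDFReal
  exact continuous_const.mul (Continuous.rpow_const (by fun_prop) fun x ↦ .inl (by positivity))

lemma integrable_prod_gaussianPDFReal_mul_invGammaPDFReal (ha : 0 < a) (hb : 0 < b) (c d : ℝ) :
    Integrable (fun p : ℝ × ℝ ↦ gaussianPDFReal 0 p.2.toNNReal p.1 * invGammaPDFReal a b p.2)
      ((volume.restrict (uIoc c d)).prod (volume.restrict (Ioi 0))) := by
  have hnorm (x : ℝ) : ∫ t in Ioi 0, ‖gaussianPDFReal 0 t.toNNReal x * invGammaPDFReal a b t‖ =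
      studentPDFReal a b x := by
    rw [← setIntegral_Ioi_gaussianPDFReal_mul_invGammaPDFReal ha hb]
    exact setIntegral_congr_fun measurableSet_Ioi fun t ht ↦ norm_of_nonneg <|
      mul_nonneg (gaussianPDFReal_nonneg _ _ _) (invGammaPDFReal_nonneg ha hb ht)
  refine (integrable_prod_iff (Measurable.aestronglyMeasurable (by fun_prop))).mpr
    ⟨ae_of_all _ (integrableOn_gaussianPDFReal_mul_invGammaPDFReal ha hb), ?_⟩
  simp only [hnorm]
  exact (continuous_studentPDFReal a hb).integrableOn_uIoc

lemma setIntegral_Ioi_stdCdf_mul_invGammaPDFReal (ha : 0 < a) (hb : 0 < b) (x : ℝ) :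
    ∫ t in Ioi 0, stdCdf (x / √t) * invGammaPDFReal a b t =
      1 / 2 + ∫ u in 0..x, studentPDFReal a b u := by
  have hsplit : ∀ t ∈ Ioi (0 : ℝ), stdCdf (x / √t) * invGammaPDFReal a b t =
      1 / 2 * invGammaPDFReal a b t +
        ∫ u in 0..x, gaussianPDFReal 0 t.toNNReal u * invGammaPDFReal a b t := by
    intro t ht
    have hcdf := stdCdf_div_sqrt t.toNNReal x
    rw [coe_toNNReal t (mem_Ioi.mp ht).le] at hcdf
    rw [hcdf, add_mul, intervalIntegral.integral_mul_const]
  have hjoint := integrable_prod_gaussianPDFReal_mul_invGammaPDFReal ha hb 0 x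
  have hgauss : IntegrableOn
      (fun t ↦ ∫ u in 0..x, gaussianPDFReal 0 t.toNNReal u * invGammaPDFReal a b t) (Ioi 0) := by
    simp only [intervalIntegral.intervalIntegral_eq_integral_uIoc]
    exact Integrable.smul (𝕜 := ℝ) _ hjoint.integral_prod_right
  rw [setIntegral_congr_fun measurableSet_Ioi hsplit,
    integral_add ((integrableOn_invGammaPDFReal ha hb).const_mul _) hgauss, integral_const_mul,
    setIntegral_Ioi_invGammaPDFReal ha hb, mul_one, ← intervalIntegral_integral_swap hjoint]
  simp only [setIntegral_Ioi_gaussianPDFReal_mul_invGammaPDFReal ha hb]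

end InvGamma

lemma hasDerivAt_sq_div_sq_add {c v : ℝ} (hvc : v ^ 2 + c ≠ 0) :
    HasDerivAt (fun v ↦ v ^ 2 / (v ^ 2 + c)) (2 * v * c / (v ^ 2 + c) ^ 2) v := by
  have hsq : HasDerivAt (fun v : ℝ ↦ v ^ 2) (2 * v) v := by simpa using hasDerivAt_pow 2 v
  exact (hsq.div (hsq.add_const c) hvc).congr_deriv (by ring)

lemma sq_div_rpow_mul_one_sub_rpow_mul_deriv (a b : ℝ) {c v : ℝ} (hc : 0 < c) (hv : 0 < v) :
    (v ^ 2 / (v ^ 2 + c)) ^ (a - 1) * (1 - v ^ 2 / (v ^ 2 + c)) ^ (b - 1) *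
        (2 * v * c / (v ^ 2 + c) ^ 2) =
      2 * c ^ b * (v ^ (2 * a - 1) * (v ^ 2 + c) ^ (-(a + b))) := by
  have hw : 0 < v ^ 2 + c := by positivity
  have hone_sub : 1 - v ^ 2 / (v ^ 2 + c) = c / (v ^ 2 + c) := by
    field_simp
    ring
  have hv_pow : v ^ (2 * a - 1) = (v ^ 2) ^ (a - 1) * v := by
    rw [← rpow_two, ← rpow_mul hv.le, ← rpow_add_one hv.ne']
    ring_nf
  have hc_pow : c ^ b = c ^ (b - 1) * c := by rw [← rpow_add_one hc.ne', sub_add_cancel]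
  have hw_pow : (v ^ 2 + c) ^ (a + b) =
      (v ^ 2 + c) ^ (a - 1) * (v ^ 2 + c) ^ (b - 1) * (v ^ 2 + c) ^ 2 := by
    rw [show a + b = a - 1 + (b - 1) + 2 by ring, rpow_add hw, rpow_add hw, rpow_two]
  rw [hone_sub, div_rpow (by positivity) hw.le, div_rpow hc.le hw.le, rpow_neg hw.le, hw_pow,
    hv_pow, hc_pow]
  field_simp

lemma integral_zero_sq_div_rpow_mul_one_sub_rpow (a b : ℝ) {c x : ℝ} (hc : 0 < c) (hx : 0 ≤ x) :
    ∫ t in 0..x ^ 2 / (x ^ 2 + c), t ^ (a - 1) * (1 - t) ^ (b - 1) =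
      2 * c ^ b * ∫ v in 0..x, v ^ (2 * a - 1) * (v ^ 2 + c) ^ (-(a + b)) := by
  have hderiv (v : ℝ) := hasDerivAt_sq_div_sq_add (c := c) (v := v) (by positivity)
  have hsubst := intervalIntegral.integral_comp_mul_deriv_of_deriv_nonneg (a := 0) (b := x)
    (f := fun v ↦ v ^ 2 / (v ^ 2 + c)) (g := fun t ↦ t ^ (a - 1) * (1 - t) ^ (b - 1))
    (fun v _ ↦ (hderiv v).continuousAt.continuousWithinAt) (fun v _ ↦ hderiv v)
    (fun v hv ↦ by
      have : 0 < v := by simpa only [min_eq_left hx] using hv.1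
      positivity)
  rw [zero_pow two_ne_zero, zero_div] at hsubst
  rw [← hsubst, ← intervalIntegral.integral_const_mul]
  exact intervalIntegral.integral_congr_Ioo_of_le hx fun v hv ↦
    sq_div_rpow_mul_one_sub_rpow_mul_deriv a b hc hv.1

lemma studentPDFReal_eq_mul_sq_add_rpow {a b : ℝ} (hb : 0 < b) (x : ℝ) :
    studentPDFReal a b x = Gamma (1 / 2 + a) / (Gamma (1 / 2) * Gamma a) *
      ((2 * b) ^ a * (x ^ 2 + 2 * b) ^ (-(1 / 2 + a))) := by
  have hbase : b + x ^ 2 / 2 = (x ^ 2 + 2 * b) / 2 := by ring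
  have htwo : (2 : ℝ) ^ (1 / 2 + a) = √2 * 2 ^ a := by rw [rpow_add two_pos, sqrt_eq_rpow]
  rw [studentPDFReal, hbase, add_comm a, div_rpow (by positivity) two_pos.le,
    rpow_neg two_pos.le, htwo, mul_rpow two_pos.le hb.le, sqrt_mul two_pos.le, Gamma_one_half_eq]
  field_simp

lemma integral_studentPDFReal_of_nonneg (a : ℝ) {b x : ℝ} (hb : 0 < b) (hx : 0 ≤ x) :
    ∫ u in 0..x, studentPDFReal a b u =
      1 / 2 * regIncBeta (x ^ 2 / (x ^ 2 + 2 * b)) (1 / 2) a := by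
  rw [regIncBeta, integral_zero_sq_div_rpow_mul_one_sub_rpow (1 / 2) a (by positivity) hx]
  simp only [studentPDFReal_eq_mul_sq_add_rpow hb, intervalIntegral.integral_const_mul,
    mul_one_div_cancel (two_ne_zero (α := ℝ)), sub_self, rpow_zero, one_mul]
  ring

lemma integral_studentPDFReal (a : ℝ) {b : ℝ} (hb : 0 < b) (x : ℝ) :
    ∫ u in 0..x, studentPDFReal a b u =
      Real.sign x / 2 * regIncBeta (x ^ 2 / (x ^ 2 + 2 * b)) (1 / 2) a := by
  rcases lt_trichotomy x 0 with hx | rfl | hx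
  · have hneg : ∫ u in 0..-x, studentPDFReal a b u = -∫ u in 0..x, studentPDFReal a b u := by
      simpa only [studentPDFReal, neg_sq, neg_zero, neg_neg, intervalIntegral.integral_symm 0 x]
        using (intervalIntegral.integral_comp_neg (studentPDFReal a b) (a := 0) (b := -x))
    rw [integral_studentPDFReal_of_nonneg a hb (neg_nonneg.mpr hx.le), neg_sq] at hneg
    rw [sign_of_neg hx]
    linarith
  · simp
  · rw [integral_studentPDFReal_of_nonneg a hb hx.le, sign_of_pos hx]

/-- Scalar version of the inverse-Wishart expectation of the Gaussian CDF: if `T` has the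
inverse-gamma density `(s/2)^{k/2}/Γ(k/2) · t^{−k/2−1} e^{−s/(2t)}` on `(0, ∞)`, then
`E[Φ(A/√T)] = ½ + (sgn A / 2) · I(A²/(A² + s); ½, k/2)`. -/
theorem stmt5 (s k : ℝ) (hs : 0 < s) (hk : 0 < k) (A : ℝ) :
    (∫ t in Set.Ioi (0:ℝ),
        stdCdf (A / Real.sqrt t) *
          ((s / 2) ^ (k / 2) / Real.Gamma (k / 2) * t ^ (-k / 2 - 1) *
            Real.exp (-s / (2 * t)))) =
      1 / 2 + Real.sign A / 2 * regIncBeta (A ^ 2 / (A ^ 2 + s)) (1 / 2) (k / 2) := by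
  have hpdf (t : ℝ) : (s / 2) ^ (k / 2) / Gamma (k / 2) * t ^ (-k / 2 - 1) * exp (-s / (2 * t)) =
      invGammaPDFReal (k / 2) (s / 2) t := by
    rw [invGammaPDFReal, ← neg_div, ← neg_div, div_div]
  simp only [hpdf]
  rw [setIntegral_Ioi_stdCdf_mul_invGammaPDFReal (by positivity) (by positivity),
    integral_studentPDFReal _ (by positivity), mul_div_cancel₀ s two_ne_zero]
end
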